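/- arXiv:2308.16146 — 2 statements merged into one kernel-verified Lean document; each statement's English description precedes it below -/
import Mathlib

section
/- Let A ∈ GL_n(ℝ) be PP. Suppose A = QR where Q is orthogonal and R is upper triangular with positive diagonal, and A = LUD where L is unipotent lower triangular with max_{i,j} |L_{ij}| = 1, U is upper triangular with positive diagonal, and D is a diagonal matrix with diagonal entries ±1. Then: (i) U D R^{−1} is upper triangular and Q = L (U D R^{−1}), so L is the unipotent lower triangular Gaussian-elimination factor of Q and Q is PP; and (ii) R (D U D)^{−1} is upper triangular with positive diagonal and L D = Q (R (D U D)^{−1}), so Q is the orthogonal factor of the QR factorization of L D. -/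
open Matrix Filter

/-- Gaussian-elimination intermediate entry `A^{(k+1)}_{ij}` (0-indexed step `k`):
the Schur complement of the leading `k × k` block. -/
noncomputable def geEntry {n : ℕ} (A : Matrix (Fin n) (Fin n) ℝ) (k i j : Fin n) : ℝ :=
  A i j - ∑ a : Fin k.val, ∑ b : Fin k.val,
    A i (Fin.castLE k.isLt.le a) *
      (A.submatrix (Fin.castLE k.isLt.le) (Fin.castLE k.isLt.le))⁻¹ a b *
      A (Fin.castLE k.isLt.le b) j

/-- `A` is PP: at each GE step the pivot dominates its column. -/
def IsPP {n : ℕ} (A : Matrix (Fin n) (Fin n) ℝ) : Prop :=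
  ∀ k i : Fin n, k ≤ i → |geEntry A k i k| ≤ |geEntry A k k k|

/-- `A` is CP: at each GE step the pivot dominates the whole untriangularized block. -/
def IsCP {n : ℕ} (A : Matrix (Fin n) (Fin n) ℝ) : Prop :=
  ∀ k i j : Fin n, k ≤ i → k ≤ j → |geEntry A k i j| ≤ |geEntry A k k k|

/-- Maximal absolute Gaussian-elimination intermediate entry of `A`. -/
noncomputable def maxGE {n : ℕ} (A : Matrix (Fin n) (Fin n) ℝ) : ℝ :=
  ⨆ k : Fin n, ⨆ i : {i : Fin n // k ≤ i}, ⨆ j : {j : Fin n // k ≤ j},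
    |geEntry A k i.1 j.1|

/-- `max_{i,j} |A_{ij}|`. -/
noncomputable def maxAbs {n : ℕ} (A : Matrix (Fin n) (Fin n) ℝ) : ℝ :=
  ⨆ i, ⨆ j, |A i j|

/-- Growth factor `ρ(A)`. -/
noncomputable def growth {n : ℕ} (A : Matrix (Fin n) (Fin n) ℝ) : ℝ :=
  maxGE A / maxAbs A

/-- `P` is a permutation matrix. -/
def IsPermMatrix {n : ℕ} (P : Matrix (Fin n) (Fin n) ℝ) : Prop :=
  ∃ σ : Equiv.Perm (Fin n), P = σ.permMatrix ℝ

/-- `D` is a diagonal matrix with diagonal entries `±1`. -/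
def IsSignDiag {n : ℕ} (D : Matrix (Fin n) (Fin n) ℝ) : Prop :=
  (∀ i j, i ≠ j → D i j = 0) ∧ (∀ i, D i i = 1 ∨ D i i = -1)

/-- Wilkinson's unipotent lower triangular matrix `L_n`. -/
def Lmat (n : ℕ) : Matrix (Fin n) (Fin n) ℝ :=
  fun i j => if i = j then 1 else if j < i then -1 else 0

/-- Wilkinson's upper triangular factor `U_n`. -/
def Umat (n : ℕ) : Matrix (Fin n) (Fin n) ℝ :=
  fun i j => if (j : ℕ) = n - 1 then 2 ^ (i : ℕ) else if i = j then 1 else 0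

/-- Wilkinson's worst-case GEPP growth matrix `A_n`. -/
def Amat (n : ℕ) : Matrix (Fin n) (Fin n) ℝ :=
  fun i j =>
    if (j : ℕ) = n - 1 ∧ (i : ℕ) < n - 1 then 1
    else if i = j then 1
    else if j < i then -1
    else 0

/-- `α_j = 1 + (2/3)(4^{j-1} - 1)` (1-indexed `j`). -/
noncomputable def alpha (j : ℕ) : ℝ := 1 + 2 / 3 * (4 ^ (j - 1) - 1)

/-- The unnormalized orthogonal factor `Q̂` (columns of `Qhat n` are, 1-indexed,
the columns described in the paper; here 0-indexed). -/
noncomputable def Qhat (n : ℕ) : Matrix (Fin n) (Fin n) ℝ :=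
  fun i j =>
    if (j : ℕ) = n - 1 then
      if (i : ℕ) = n - 1 then 1 else 2 ^ (n - 2 - (i : ℕ))
    else if (j : ℕ) = n - 2 then
      if (i : ℕ) = n - 2 then 1 else if (i : ℕ) = n - 1 then -1 else 0
    else if (i : ℕ) < (j : ℕ) then
      -((n : ℝ) - (j : ℕ) - 2) * 2 ^ ((j : ℕ) - (i : ℕ) - 1)
    else if (i : ℕ) = (j : ℕ) then
      ((n : ℝ) - (j : ℕ) - 1) * (alpha ((j : ℕ) + 1) - 1) + 1
    else -alpha ((j : ℕ) + 1)

/-- The diagonal normalization matrix `D̂`. -/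
noncomputable def Dhat (n : ℕ) : Matrix (Fin n) (Fin n) ℝ :=
  Matrix.diagonal fun j =>
    if (j : ℕ) = 0 then (n : ℝ)
    else if (j : ℕ) = n - 2 then 2
    else if (j : ℕ) = n - 1 then 2 * alpha (n - 1)
    else ((n : ℝ) - (j : ℕ) - 1) ^ 2 * (alpha ((j : ℕ) + 1) - 1) ^ 2 *
        (2 * alpha ((j : ℕ) + 1) - 1) / (2 * alpha ((j : ℕ) + 1) - 2) +
      ((n : ℝ) - (j : ℕ) - 1) * (alpha ((j : ℕ) + 1) ^ 2 + alpha ((j : ℕ) + 1) - 1) +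
      2 * alpha (j : ℕ)

/-- `Q_n = Q̂ D̂^{-1/2}`, the orthogonal QR factor of `L_n`. -/
noncomputable def Qmat (n : ℕ) : Matrix (Fin n) (Fin n) ℝ :=
  Qhat n * Matrix.diagonal fun m => (Real.sqrt (Dhat n m m))⁻¹

/-- Frobenius norm. -/
noncomputable def frobNorm {n : ℕ} (M : Matrix (Fin n) (Fin n) ℝ) : ℝ :=
  Real.sqrt (∑ i, ∑ j, M i j ^ 2)

/-- The Givens rotation `G(θ, i, j)`. -/
noncomputable def givens (n : ℕ) (θ : ℝ) (i j : Fin n) : Matrix (Fin n) (Fin n) ℝ :=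
  fun a b =>
    if a = i ∧ b = i then Real.cos θ
    else if a = j ∧ b = j then Real.cos θ
    else if a = i ∧ b = j then -Real.sin θ
    else if a = j ∧ b = i then Real.sin θ
    else if a = b then 1 else 0

/-- The ordered product of Givens rotations `Q(θ) = ∏_{i=1}^{n-1} ∏_{j=i+1}^n G(θ_{ij}, i, j)`. -/
noncomputable def QofTheta (n : ℕ) (θ : Fin n → Fin n → ℝ) : Matrix (Fin n) (Fin n) ℝ :=
  ((List.finRange n).map fun i =>
    (((List.finRange n).filter fun j => decide (i < j)).map fun j =>
      givens n (θ i j) i j).prod).prod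

/-! Cancelling `R` in `Q * R = L * U * D` exhibits `Q` as `L` times an upper triangular matrix, so
`L` is also the elimination factor of `Q`. The Schur complements of such a product `L * V` only see
the trailing columns of `L` and rows of `V`, so the pivot column of step `k` is column `k` of `L`
scaled by `V k k`, and it is dominated by its pivot because column `k` of `L` is. Since
`D * D = 1`, also `Q * R = (L * D) * (D * U * D)`, and cancelling `D * U * D` gives the second
factorization. -/

section Triangular

variable {m α R K : Type*} [Fintype m]

lemma mul_apply_self_of_isUpperTriangular [LinearOrder m] [NonUnitalNonAssocSemiring R]
    {M N : Matrix m m R} (hM : M.IsUpperTriangular) (hN : N.IsUpperTriangular) (i : m) :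
    (M * N) i i = M i i * N i i := by
  rw [Matrix.mul_apply]
  refine Fintype.sum_eq_single i fun j hj => ?_
  rcases hj.lt_or_gt with hji | hij
  · rw [hM hji, zero_mul]
  · rw [hN hij, mul_zero]

lemma isUnit_det_iff_of_isUpperTriangular [LinearOrder m] [CommRing R] {M : Matrix m m R}
    (hM : M.IsUpperTriangular) : IsUnit M.det ↔ ∀ i, IsUnit (M i i) := by
  rw [Matrix.det_of_isUpperTriangular hM, IsUnit.prod_univ_iff]

lemma isUnit_det_iff_of_isLowerTriangular [LinearOrder m] [CommRing R] {M : Matrix m m R}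
    (hM : M.IsLowerTriangular) : IsUnit M.det ↔ ∀ i, IsUnit (M i i) := by
  rw [Matrix.det_of_isLowerTriangular M hM, IsUnit.prod_univ_iff]

lemma blockTriangular_inv [DecidableEq m] [LinearOrder α] [CommRing R] {M : Matrix m m R}
    {b : m → α} (hM : M.BlockTriangular b) : M⁻¹.BlockTriangular b := by
  by_cases hdet : IsUnit M.det
  · have := Matrix.invertibleOfIsUnitDet M hdet
    exact Matrix.blockTriangular_inv_of_blockTriangular hM
  · rw [Matrix.nonsing_inv_apply_not_isUnit M hdet]
    exact Matrix.blockTriangular_zero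

lemma inv_apply_self_of_isUpperTriangular [LinearOrder m] [Field K] {M : Matrix m m K}
    (hM : M.IsUpperTriangular) (hdet : IsUnit M.det) (i : m) : M⁻¹ i i = (M i i)⁻¹ := by
  refine eq_inv_of_mul_eq_one_right ?_
  rw [← mul_apply_self_of_isUpperTriangular hM (blockTriangular_inv hM),
    Matrix.mul_nonsing_inv M hdet, Matrix.one_apply_eq]

lemma conj_involution_apply_self_of_isUpperTriangular [LinearOrder m] [CommRing R]
    {U D : Matrix m m R} (hU : U.IsUpperTriangular) (hD : D.IsUpperTriangular) (hDD : D * D = 1)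
    (i : m) : (D * U * D) i i = U i i := by
  have hDsq : D i i * D i i = 1 := by
    rw [← mul_apply_self_of_isUpperTriangular hD hD, hDD, Matrix.one_apply_eq]
  rw [mul_apply_self_of_isUpperTriangular (hD.mul hU) hD,
    mul_apply_self_of_isUpperTriangular hD hU]
  linear_combination U i i * hDsq

end Triangular

section LeadingBlocks

variable {l m o p q r R : Type*} [Fintype m] [Fintype o] {c : o → m}

lemma mul_eq_submatrix_mul_submatrix [NonUnitalNonAssocSemiring R] (hc : c.Injective)
    {M : Matrix l m R} {N : Matrix m p R} (h : ∀ i, ∀ x ∉ Set.range c, ∀ j, M i x * N x j = 0) :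
    M * N = M.submatrix id c * N.submatrix c id := by
  ext i j
  exact (Fintype.sum_of_injective c hc _ _ (fun x hx => h i x hx j) fun _ => rfl).symm

lemma submatrix_mul_of_isUpperTriangular [LinearOrder m] [NonUnitalNonAssocSemiring R]
    (hc : c.Injective) (hc_range : IsLowerSet (Set.range c)) (M : Matrix l m R) {V : Matrix m m R}
    (hV : V.IsUpperTriangular) (f : q → l) :
    (M * V).submatrix f c = M.submatrix f c * V.submatrix c c := by
  refine mul_eq_submatrix_mul_submatrix (M := M.submatrix f id) (N := V.submatrix id c) hc
    fun i x hx b => ?_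
  have hbx : c b < x := lt_of_not_ge fun hxb => hx (hc_range hxb ⟨b, rfl⟩)
  rw [Matrix.submatrix_apply V, id, hV hbx, mul_zero]

lemma submatrix_mul_of_isLowerTriangular [LinearOrder m] [NonUnitalNonAssocSemiring R]
    (hc : c.Injective) (hc_range : IsLowerSet (Set.range c)) {L : Matrix m m R}
    (hL : L.IsLowerTriangular) (N : Matrix m p R) (g : r → p) :
    (L * N).submatrix c g = L.submatrix c c * N.submatrix c g := by
  refine mul_eq_submatrix_mul_submatrix (M := L.submatrix c id) (N := N.submatrix id g) hc
    fun a x hx j => ?_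
  have hax : c a < x := lt_of_not_ge fun hxa => hx (hc_range hxa ⟨a, rfl⟩)
  rw [Matrix.submatrix_apply L, id, hL hax, zero_mul]

lemma submatrix_mul_inv_mul_submatrix_of_triangular [LinearOrder m] [LinearOrder o] [CommRing R]
    (hc : StrictMono c) (hc_range : IsLowerSet (Set.range c)) {L V : Matrix m m R}
    (hL : L.IsLowerTriangular) (hLd : ∀ a, IsUnit (L (c a) (c a)))
    (hV : V.IsUpperTriangular) (hVd : ∀ a, IsUnit (V (c a) (c a))) :
    (L * V).submatrix id c * ((L * V).submatrix c c)⁻¹ * (L * V).submatrix c id =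
      L.submatrix id c * V.submatrix c id := by
  have hLdet : IsUnit (L.submatrix c c).det :=
    (isUnit_det_iff_of_isLowerTriangular fun _ _ h => hL (hc h)).mpr hLd
  have hVdet : IsUnit (V.submatrix c c).det :=
    (isUnit_det_iff_of_isUpperTriangular fun _ _ h => hV (hc h)).mpr hVd
  rw [submatrix_mul_of_isUpperTriangular hc.injective hc_range L hV id,
    submatrix_mul_of_isUpperTriangular hc.injective hc_range L hV c,
    submatrix_mul_of_isLowerTriangular hc.injective hc_range hL V id, Matrix.mul_inv_rev,
    ← Matrix.mul_assoc (L.submatrix id c * _), Matrix.mul_nonsing_inv_cancel_right _ _ hVdet,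
    ← Matrix.mul_assoc, Matrix.nonsing_inv_mul_cancel_right _ _ hLdet]

end LeadingBlocks

section GaussianElimination

variable {n : ℕ}

lemma geEntry_eq_schurComplement (A : Matrix (Fin n) (Fin n) ℝ) (k i j : Fin n) :
    geEntry A k i j = A i j -
      (A.submatrix id (Fin.castLE k.isLt.le) *
        (A.submatrix (Fin.castLE k.isLt.le) (Fin.castLE k.isLt.le))⁻¹ *
        A.submatrix (Fin.castLE k.isLt.le) id) i j := by
  rw [Matrix.mul_assoc]
  simp only [geEntry, Matrix.mul_apply, Matrix.submatrix_apply, id, Finset.mul_sum, mul_assoc]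

lemma sum_castLE_eq_sum_Iio {M : Type*} [AddCommMonoid M] (k : Fin n) (f : Fin n → M) :
    ∑ a : Fin k, f (Fin.castLE k.isLt.le a) = ∑ x ∈ Finset.Iio k, f x := by
  refine Finset.sum_of_injOn _ (Fin.castLE_injective _).injOn
    (fun a _ => Finset.mem_coe.mpr (Finset.mem_Iio.mpr a.isLt)) (fun x hx hx_range => ?_)
    fun _ _ => rfl
  have hxk : x < k := Finset.mem_Iio.mp hx
  exact absurd ⟨⟨x, hxk⟩, Finset.mem_coe.mpr (Finset.mem_univ _), rfl⟩ hx_range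

variable {L V : Matrix (Fin n) (Fin n) ℝ}

lemma geEntry_mul_of_triangular {k : Fin n} (hL : L.IsLowerTriangular)
    (hLd : ∀ i < k, L i i ≠ 0) (hV : V.IsUpperTriangular) (hVd : ∀ i < k, V i i ≠ 0) (i j : Fin n) :
    geEntry (L * V) k i j = ∑ x ∈ Finset.Ici k, L i x * V x j := by
  have hrange : IsLowerSet (Set.range (Fin.castLE k.isLt.le)) := by
    rw [Fin.range_castLE]
    exact fun _ _ hba ha => hba.trans_lt ha
  have hcompl : (Finset.Iio k)ᶜ = Finset.Ici k := by
    ext x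
    simp only [Finset.mem_compl, Finset.mem_Iio, Finset.mem_Ici, not_lt]
  rw [geEntry_eq_schurComplement,
    submatrix_mul_inv_mul_submatrix_of_triangular (Fin.strictMono_castLE _) hrange hL
      (fun a => (hLd _ a.isLt).isUnit) hV fun a => (hVd _ a.isLt).isUnit, sub_eq_iff_eq_add]
  calc (L * V) i j
      = ∑ x ∈ (Finset.Iio k)ᶜ, L i x * V x j + ∑ x ∈ Finset.Iio k, L i x * V x j :=
        (Finset.sum_compl_add_sum (Finset.Iio k) fun x => L i x * V x j).symm
    _ = ∑ x ∈ Finset.Ici k, L i x * V x j +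
          ∑ a : Fin k, L i (Fin.castLE k.isLt.le a) * V (Fin.castLE k.isLt.le a) j := by
        rw [hcompl, sum_castLE_eq_sum_Iio k fun x => L i x * V x j]

lemma geEntry_mul_pivot_column {k : Fin n} (hL : L.IsLowerTriangular)
    (hLd : ∀ i < k, L i i ≠ 0) (hV : V.IsUpperTriangular) (hVd : ∀ i < k, V i i ≠ 0) (i : Fin n) :
    geEntry (L * V) k i k = L i k * V k k := by
  rw [geEntry_mul_of_triangular hL hLd hV hVd]
  refine Finset.sum_eq_single_of_mem k (Finset.mem_Ici.mpr le_rfl) fun x hx hxk => ?_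
  rw [hV ((Finset.mem_Ici.mp hx).lt_of_ne' hxk), mul_zero]

lemma isPP_mul_of_triangular (hL : L.IsLowerTriangular) (hLd : ∀ i, L i i ≠ 0)
    (hLdom : ∀ i j, |L i j| ≤ |L j j|) (hV : V.IsUpperTriangular) (hVd : ∀ i, V i i ≠ 0) :
    IsPP (L * V) := by
  intro k i _
  have hcol := geEntry_mul_pivot_column (k := k) hL (fun i _ => hLd i) hV fun i _ => hVd i
  rw [hcol, hcol, abs_mul, abs_mul]
  exact mul_le_mul_of_nonneg_right (hLdom i k) (abs_nonneg _)

end GaussianElimination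

lemma abs_apply_le_maxAbs {n : ℕ} (M : Matrix (Fin n) (Fin n) ℝ) (i j : Fin n) :
    |M i j| ≤ maxAbs M :=
  (Finite.le_ciSup (fun j => |M i j|) j).trans (Finite.le_ciSup (fun i => ⨆ j, |M i j|) i)

lemma IsSignDiag.mul_self_eq_one {n : ℕ} {D : Matrix (Fin n) (Fin n) ℝ} (hD : IsSignDiag D) :
    D * D = 1 := by
  have hdiag : Matrix.diagonal D.diag = D := Matrix.IsDiag.diagonal_diag fun i j => hD.1 i j
  rw [← hdiag, Matrix.diagonal_mul_diagonal, ← Matrix.diagonal_one]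
  exact congrArg _ (funext fun i => mul_self_eq_one_iff.mpr (hD.2 i))

section SharedFactors

variable {m : Type*} [Fintype m] [DecidableEq m] {S : Type*} [CommRing S]
  {Q R L U D : Matrix m m S}

lemma left_factor_eq_mul_mul_inv (h : Q * R = L * U * D) (hR : IsUnit R.det) :
    Q = L * (U * D * R⁻¹) := by
  rw [← Matrix.mul_assoc, ← Matrix.mul_assoc, ← h, Matrix.mul_nonsing_inv_cancel_right _ _ hR]

lemma mul_involution_eq_mul_mul_inv (h : Q * R = L * U * D) (hDD : D * D = 1)
    (hDUD : IsUnit (D * U * D).det) : L * D = Q * (R * (D * U * D)⁻¹) := by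
  have hfactor : Q * R = L * D * (D * U * D) := by
    calc Q * R = L * (D * D) * U * D := by rw [hDD, Matrix.mul_one, h]
      _ = L * D * (D * U * D) := by simp only [Matrix.mul_assoc]
  rw [← Matrix.mul_assoc, hfactor, Matrix.mul_nonsing_inv_cancel_right _ _ hDUD]

end SharedFactors

theorem qr_lu_shared_general {n : ℕ} {Q R L U D : Matrix (Fin n) (Fin n) ℝ}
    (h : Q * R = L * U * D)
    (hR : R.IsUpperTriangular) (hRd : ∀ i, 0 < R i i)
    (hL : L.IsLowerTriangular) (hLd : ∀ i, L i i ≠ 0) (hLdom : ∀ i j, |L i j| ≤ |L j j|)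
    (hU : U.IsUpperTriangular) (hUd : ∀ i, 0 < U i i)
    (hD : D.IsUpperTriangular) (hDD : D * D = 1) :
    ((U * D * R⁻¹).IsUpperTriangular ∧ Q = L * (U * D * R⁻¹) ∧ IsPP Q) ∧
      ((R * (D * U * D)⁻¹).IsUpperTriangular ∧ (∀ i, 0 < (R * (D * U * D)⁻¹) i i) ∧
        L * D = Q * (R * (D * U * D)⁻¹)) := by
  have hDd (i) : IsUnit (D i i) :=
    (isUnit_det_iff_of_isUpperTriangular hD).mp (Matrix.isUnit_det_of_right_inverse hDD) i
  have hRdet : IsUnit R.det :=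
    (isUnit_det_iff_of_isUpperTriangular hR).mpr fun i => (hRd i).ne'.isUnit
  have hV : (U * D * R⁻¹).IsUpperTriangular := (hU.mul hD).mul (blockTriangular_inv hR)
  have hVd (i) : (U * D * R⁻¹) i i ≠ 0 := by
    rw [mul_apply_self_of_isUpperTriangular (hU.mul hD) (blockTriangular_inv hR),
      mul_apply_self_of_isUpperTriangular hU hD, inv_apply_self_of_isUpperTriangular hR hRdet]
    exact mul_ne_zero (mul_ne_zero (hUd i).ne' (hDd i).ne_zero) (inv_ne_zero (hRd i).ne')
  have hQ : Q = L * (U * D * R⁻¹) := left_factor_eq_mul_mul_inv h hRdet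
  have hW : (D * U * D).IsUpperTriangular := (hD.mul hU).mul hD
  have hWd (i) : (D * U * D) i i = U i i :=
    conj_involution_apply_self_of_isUpperTriangular hU hD hDD i
  have hWdet : IsUnit (D * U * D).det :=
    (isUnit_det_iff_of_isUpperTriangular hW).mpr fun i => hWd i ▸ (hUd i).ne'.isUnit
  have hpos (i) : 0 < (R * (D * U * D)⁻¹) i i := by
    rw [mul_apply_self_of_isUpperTriangular hR (blockTriangular_inv hW),
      inv_apply_self_of_isUpperTriangular hW hWdet, hWd]
    exact mul_pos (hRd i) (inv_pos.mpr (hUd i))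
  exact ⟨⟨hV, hQ, hQ ▸ isPP_mul_of_triangular hL hLd hLdom hV hVd⟩,
    hR.mul (blockTriangular_inv hW), hpos, mul_involution_eq_mul_mul_inv h hDD hWdet⟩

/-- shared structure of QR and LU factorizations: if `A` is invertible and PP,
`A = QR` with `Q` orthogonal and `R` upper triangular with positive diagonal, and
`A = LUD` with `L` unipotent lower triangular with `‖L‖_max = 1`, `U` upper triangular with
positive diagonal, and `D` a diagonal sign matrix, then `Q = L(UDR⁻¹)` is the GE (GENP/GEPP)
factorization of `Q` (so `Q` is PP), and `LD = Q(R(DUD)⁻¹)` is the QR factorization of `LD`. -/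
theorem qr_lu_shared (n : ℕ) (A Q R L U D : Matrix (Fin n) (Fin n) ℝ)
    (hA : IsUnit A) (hPP : IsPP A)
    (hQR : A = Q * R) (hQ : Qᵀ * Q = 1)
    (hRu : ∀ i j : Fin n, j < i → R i j = 0) (hRd : ∀ i : Fin n, 0 < R i i)
    (hLUD : A = L * U * D)
    (hLl : ∀ i j : Fin n, i < j → L i j = 0) (hLd : ∀ i : Fin n, L i i = 1)
    (hLmax : maxAbs L = 1)
    (hUu : ∀ i j : Fin n, j < i → U i j = 0) (hUd : ∀ i : Fin n, 0 < U i i)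
    (hD : IsSignDiag D) :
    ((∀ i j : Fin n, j < i → (U * D * R⁻¹) i j = 0) ∧
      Q = L * (U * D * R⁻¹) ∧ IsPP Q) ∧
    ((∀ i j : Fin n, j < i → (R * (D * U * D)⁻¹) i j = 0) ∧
      (∀ i : Fin n, 0 < (R * (D * U * D)⁻¹) i i) ∧
      L * D = Q * (R * (D * U * D)⁻¹)) :=
  qr_lu_shared_general (hQR.symm.trans hLUD) hRu hRd hLl (fun i => by simp [hLd i])
    (fun i j => by simpa [hLd, hLmax] using abs_apply_le_maxAbs L i j) hUu hUd
    (fun i j hji => hD.1 i j hji.ne') hD.mul_self_eq_one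
end

section
/- Let A ∈ ℝ^{n×n} (n ≥ 3) be PP with maximal growth factor ρ(A) = 2^{n−1}, and let A = QR be its QR factorization with R upper triangular with positive diagonal. Then Q = D Q_n D̃ for some diagonal matrices D, D̃ with diagonal entries ±1, where Q_n = Q̂ D̂^{−1/2}. Moreover ρ(Q) = ρ(Q_n). -/
open Matrix Filter

/-!
Write `B` for the largest absolute entry of `A`. Partial pivoting bounds the multipliers `l` of the
elimination by `1`, so each step at most doubles the entries, and growth `2 ^ (n - 1)` can only
occur in the last column, at the last step, with equality in `|x - l * y| ≤ |x| + |l| * |y|` at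
every earlier step. Hence the last column of `A` is `B • s` with signs `s`, every multiplier is
`-s i * s k`, and `A = D * Lmat n * U` with `D = diagonal s` and `U` upper triangular.

Column `j` of `Qmat n` is orthogonal to the columns `i < j` of `Lmat n`, so `(Qmat n)ᵀ * Lmat n` is
upper triangular. Then `(D * Qmat n)ᵀ * Q = (Qmat n)ᵀ * Lmat n * U * R⁻¹` is orthogonal and upper
triangular, which makes it a diagonal sign matrix. Multiplication by diagonal sign matrices changes
no absolute value during the elimination, hence not the growth factor.
-/

section GaussianElimination

variable {K : Type*} [Field K]

/-- Entry `(i, j)` of the array obtained from `a` by `k` steps of Gaussian elimination without row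
exchanges. Arrays are indexed by `ℕ`, so that all leading blocks of `a` are eliminated at once; a
zero pivot leaves the array unchanged because `x / 0 = 0`. -/
def gaussElim (a : ℕ → ℕ → K) : ℕ → ℕ → ℕ → K
  | 0, i, j => a i j
  | k + 1, i, j =>
    gaussElim a k i j - gaussElim a k i k / gaussElim a k k k * gaussElim a k k j

/-- The factor by which row `k` is subtracted from row `i` in step `k` of the elimination. -/
def gaussMultiplier (a : ℕ → ℕ → K) (i k : ℕ) : K :=
  gaussElim a k i k / gaussElim a k k k

/-- The leading `p × q` block of an infinite array. -/
def leadingBlock {R : Type*} (p q : ℕ) (a : ℕ → ℕ → R) : Matrix (Fin p) (Fin q) R :=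
  Matrix.of fun i j => a i j

lemma exists_leadingBlock_eq {R : Type*} [Zero R] {n : ℕ} (A : Matrix (Fin n) (Fin n) R) :
    ∃ a, leadingBlock n n a = A :=
  ⟨fun i j => if h : i < n ∧ j < n then A ⟨i, h.1⟩ ⟨j, h.2⟩ else 0, by
    ext i j; simp [leadingBlock]⟩

variable {a : ℕ → ℕ → K}

lemma gaussElim_succ (k i j : ℕ) :
    gaussElim a (k + 1) i j = gaussElim a k i j - gaussMultiplier a i k * gaussElim a k k j :=
  rfl

lemma gaussElim_add_sum (m i j : ℕ) :
    gaussElim a m i j + ∑ k : Fin m, gaussMultiplier a i k * gaussElim a k k j = a i j := by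
  induction m with
  | zero => simp [gaussElim]
  | succ m ih =>
    rw [Fin.sum_univ_castSucc, gaussElim_succ, ← ih]
    simp only [Fin.val_castSucc, Fin.val_last]
    ring

lemma gaussElim_eq_zero {m : ℕ} (hp : ∀ k < m, gaussElim a k k k ≠ 0) {i j : ℕ}
    (hij : i < m ∨ j < m) : gaussElim a m i j = 0 := by
  induction m generalizing i j with
  | zero => omega
  | succ m ih =>
    replace ih : ∀ {i j}, i < m ∨ j < m → gaussElim a m i j = 0 :=
      ih fun k hk => hp k (hk.trans m.lt_succ_self)
    have hm : gaussElim a m m m ≠ 0 := hp m m.lt_succ_self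
    rw [gaussElim_succ, gaussMultiplier]
    obtain hi | rfl | hj | rfl : i < m ∨ i = m ∨ j < m ∨ j = m := by omega
    · rw [ih (.inl hi), ih (.inl hi)]; simp
    · rw [div_self hm, one_mul, sub_self]
    · rw [ih (.inr hj), ih (.inr hj)]; simp
    · rw [div_mul_cancel₀ _ hm, sub_self]

lemma leadingBlock_eq_mul {m p q : ℕ} (h : ∀ i < p, ∀ j < q, gaussElim a m i j = 0) :
    leadingBlock p q a =
      leadingBlock p m (gaussMultiplier a) * leadingBlock m q fun k => gaussElim a k k := by
  ext i j
  simp only [leadingBlock, Matrix.mul_apply, Matrix.of_apply]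
  rw [← gaussElim_add_sum (a := a) m i j, h i i.2 j j.2, zero_add]

lemma isUpperTriangular_leadingBlock_gaussElim {n : ℕ} (hp : ∀ k < n, gaussElim a k k k ≠ 0) :
    (leadingBlock n n fun k => gaussElim a k k).IsUpperTriangular := fun i _ hji =>
  gaussElim_eq_zero (fun k hk => hp k (hk.trans i.2)) (.inr hji)

lemma isUnit_leadingBlock_gaussElim {n : ℕ} (hp : ∀ k < n, gaussElim a k k k ≠ 0) :
    IsUnit (leadingBlock n n fun k => gaussElim a k k) := by
  rw [Matrix.isUnit_iff_isUnit_det,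
    Matrix.det_of_isUpperTriangular (isUpperTriangular_leadingBlock_gaussElim hp),
    isUnit_iff_ne_zero]
  exact Finset.prod_ne_zero_iff.mpr fun k _ => hp k k.2

lemma gaussMultiplier_eq_zero {n i j : ℕ} (hp : ∀ k < n, gaussElim a k k k ≠ 0) (hij : i < j)
    (hj : j < n) : gaussMultiplier a i j = 0 := by
  rw [gaussMultiplier, gaussElim_eq_zero (fun k hk => hp k (hk.trans hj)) (.inl hij), zero_div]

lemma isUnit_leadingBlock_gaussMultiplier {n : ℕ} (hp : ∀ k < n, gaussElim a k k k ≠ 0) :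
    IsUnit (leadingBlock n n (gaussMultiplier a)) := by
  rw [Matrix.isUnit_iff_isUnit_det, Matrix.det_of_isLowerTriangular
    (leadingBlock n n (gaussMultiplier a)) fun _ j hij => gaussMultiplier_eq_zero hp hij j.2,
    isUnit_iff_ne_zero]
  exact Finset.prod_ne_zero_iff.mpr fun k _ => div_ne_zero (hp k k.2) (hp k k.2)

end GaussianElimination

section SchurComplement

lemma vecMul_dotProduct_inv_mul_mul_mulVec {ι K : Type*} [Fintype ι] [DecidableEq ι] [CommRing K]
    {X Y : Matrix ι ι K} (hX : IsUnit X) (hY : IsUnit Y) (M : Matrix ι ι K) (x y : ι → K) :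
    (x ᵥ* Y) ⬝ᵥ ((X * M * Y)⁻¹ *ᵥ (X *ᵥ y)) = x ⬝ᵥ (M⁻¹ *ᵥ y) := by
  rw [Matrix.isUnit_iff_isUnit_det] at hX hY
  rw [Matrix.mul_inv_rev, Matrix.mul_inv_rev, ← Matrix.dotProduct_mulVec, Matrix.mulVec_mulVec,
    Matrix.mulVec_mulVec, Matrix.mul_nonsing_inv_cancel_left _ _ hY,
    Matrix.nonsing_inv_mul_cancel_right _ _ hX]

lemma geEntry_eq_sub_dotProduct {n : ℕ} (A : Matrix (Fin n) (Fin n) ℝ) (k i j : Fin n) :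
    geEntry A k i j = A i j - (fun b => A i (Fin.castLE k.isLt.le b)) ⬝ᵥ
      ((A.submatrix (Fin.castLE k.isLt.le) (Fin.castLE k.isLt.le))⁻¹ *ᵥ
        fun b => A (Fin.castLE k.isLt.le b) j) := by
  simp only [geEntry, dotProduct, Matrix.mulVec, Finset.mul_sum, mul_assoc]

lemma geEntry_leadingBlock {n : ℕ} {a : ℕ → ℕ → ℝ} {k : Fin n}
    (hp : ∀ m < k.val, gaussElim a m m m ≠ 0) (i j : Fin n) :
    geEntry (leadingBlock n n a) k i j = gaussElim a k i j := by
  set L := leadingBlock k k (gaussMultiplier a)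
  set U := leadingBlock k k fun m => gaussElim a m m
  have hblock : (leadingBlock n n a).submatrix (Fin.castLE k.isLt.le) (Fin.castLE k.isLt.le) =
      L * 1 * U := by
    rw [Matrix.mul_one]
    exact leadingBlock_eq_mul fun i hi _ _ => gaussElim_eq_zero hp (.inl hi)
  have hrow : (fun b => leadingBlock n n a i (Fin.castLE k.isLt.le b)) =
      (fun m : Fin k => gaussMultiplier a i m) ᵥ* U := by
    ext b
    exact (gaussElim_add_sum k i b).symm.trans
      (by rw [gaussElim_eq_zero hp (.inr b.2), zero_add]; rfl)
  have hcol : (fun b => leadingBlock n n a (Fin.castLE k.isLt.le b) j) =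
      L *ᵥ fun m : Fin k => gaussElim a m m j := by
    ext b
    exact (gaussElim_add_sum k b j).symm.trans
      (by rw [gaussElim_eq_zero hp (.inl b.2), zero_add]; rfl)
  rw [geEntry_eq_sub_dotProduct, hblock, hrow, hcol, vecMul_dotProduct_inv_mul_mul_mulVec
    (isUnit_leadingBlock_gaussMultiplier hp) (isUnit_leadingBlock_gaussElim hp),
    inv_one, Matrix.one_mulVec, sub_eq_iff_eq_add]
  exact (gaussElim_add_sum k i j).symm

lemma geEntry_diagonal_mul_mul_diagonal {n : ℕ} (M : Matrix (Fin n) (Fin n) ℝ) {s t : Fin n → ℝ}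
    (hs : ∀ i, s i ≠ 0) (ht : ∀ i, t i ≠ 0) (k i j : Fin n) :
    geEntry (diagonal s * M * diagonal t) k i j = s i * geEntry M k i j * t j := by
  let c : Fin k → Fin n := Fin.castLE k.isLt.le
  have hunit {u : Fin n → ℝ} (hu : ∀ i, u i ≠ 0) : IsUnit (diagonal (u ∘ c)) := by
    simp [Matrix.isUnit_diagonal, Pi.isUnit_iff, hu]
  have hblock : (diagonal s * M * diagonal t).submatrix c c =
      diagonal (s ∘ c) * M.submatrix c c * diagonal (t ∘ c) := by
    ext p q
    simp only [Matrix.submatrix_apply, Matrix.mul_diagonal, Matrix.diagonal_mul, Function.comp]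
  have hrow : (fun b => (diagonal s * M * diagonal t) i (c b)) =
      s i • ((fun b => M i (c b)) ᵥ* diagonal (t ∘ c)) := by
    ext b
    simp [Matrix.vecMul_diagonal, mul_assoc]
  have hcol : (fun b => (diagonal s * M * diagonal t) (c b) j) =
      t j • (diagonal (s ∘ c) *ᵥ fun b => M (c b) j) := by
    ext b
    simp [Matrix.mulVec_diagonal, mul_comm]
  rw [geEntry_eq_sub_dotProduct, hblock, hrow, hcol, smul_dotProduct, Matrix.mulVec_smul,
    dotProduct_smul, vecMul_dotProduct_inv_mul_mul_mulVec (hunit hs) (hunit ht),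
    geEntry_eq_sub_dotProduct, Matrix.mul_diagonal, Matrix.diagonal_mul, smul_eq_mul, smul_eq_mul]
  ring

end SchurComplement

section SignDiagonal

variable {n : ℕ} {D D' : Matrix (Fin n) (Fin n) ℝ}

lemma isSignDiag_diagonal {s : Fin n → ℝ} (hs : ∀ i, |s i| = 1) : IsSignDiag (diagonal s) :=
  ⟨fun _ _ => Matrix.diagonal_apply_ne _, fun i => by
    simpa only [Matrix.diagonal_apply_eq] using (abs_eq zero_le_one).mp (hs i)⟩

lemma IsSignDiag.abs_diag (hD : IsSignDiag D) (i : Fin n) : |D.diag i| = 1 :=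
  (abs_eq zero_le_one).mpr (hD.2 i)

lemma IsSignDiag.diagonal_diag (hD : IsSignDiag D) : diagonal D.diag = D :=
  Matrix.IsDiag.diagonal_diag fun i j hij => hD.1 i j hij

lemma IsSignDiag.mem_orthogonalGroup (hD : IsSignDiag D) : D ∈ orthogonalGroup (Fin n) ℝ := by
  rw [Matrix.mem_orthogonalGroup_iff, ← hD.diagonal_diag, Matrix.diagonal_transpose,
    Matrix.diagonal_mul_diagonal, Matrix.diagonal_eq_one]
  exact funext fun i => mul_self_eq_one_iff.mpr (hD.2 i)

lemma growth_mul_mul_of_isSignDiag (hD : IsSignDiag D) (hD' : IsSignDiag D')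
    (M : Matrix (Fin n) (Fin n) ℝ) : growth (D * M * D') = growth M := by
  have hne {E : Matrix (Fin n) (Fin n) ℝ} (hE : IsSignDiag E) (i : Fin n) : E.diag i ≠ 0 := by
    rw [← abs_pos, hE.abs_diag]; exact one_pos
  rw [← hD.diagonal_diag, ← hD'.diagonal_diag]
  simp only [growth, maxGE, maxAbs, geEntry_diagonal_mul_mul_diagonal M (hne hD) (hne hD'),
    Matrix.mul_diagonal, Matrix.diagonal_mul, abs_mul, hD.abs_diag, hD'.abs_diag, one_mul, mul_one]

lemma isSignDiag_of_isUpperTriangular (hU : D.IsUpperTriangular)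
    (hO : D ∈ orthogonalGroup (Fin n) ℝ) : IsSignDiag D := by
  rw [Matrix.mem_orthogonalGroup_iff'] at hO
  have hlower : Dᵀ.IsUpperTriangular := by
    let := invertibleOfLeftInverse D Dᵀ hO
    rw [← Matrix.inv_eq_left_inv hO]
    exact Matrix.blockTriangular_inv_of_blockTriangular hU
  have hoff (i j : Fin n) (hij : i ≠ j) : D i j = 0 := hij.lt_or_gt.elim (hlower ·) (hU ·)
  refine ⟨hoff, fun i => mul_self_eq_one_iff.mp ?_⟩
  calc D i i * D i i = (Dᵀ * D) i i := by
        rw [Matrix.mul_apply, Finset.sum_eq_single i _ (by simp), Matrix.transpose_apply]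
        intro k _ hk
        rw [hoff k i hk, mul_zero]
    _ = 1 := by rw [hO, Matrix.one_apply_eq]

lemma exists_isSignDiag_eq_mul_of_isUpperTriangular {P Q R : Matrix (Fin n) (Fin n) ℝ}
    (hP : P ∈ orthogonalGroup (Fin n) ℝ) (hQ : Q ∈ orthogonalGroup (Fin n) ℝ)
    (hR : R.IsUpperTriangular) (hRunit : IsUnit R) (hPQR : (Pᵀ * (Q * R)).IsUpperTriangular) :
    ∃ S, IsSignDiag S ∧ Q = P * S := by
  refine ⟨Pᵀ * Q, isSignDiag_of_isUpperTriangular ?_ ?_, ?_⟩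
  · let := hRunit.invertible
    rw [← Matrix.mul_assoc] at hPQR
    simpa [Matrix.mul_assoc] using
      hPQR.mul (Matrix.blockTriangular_inv_of_blockTriangular hR)
  · exact mul_mem (Unitary.star_mem hP) hQ
  · rw [← Matrix.mul_assoc, (Matrix.mem_orthogonalGroup_iff _ _).mp hP, Matrix.one_mul]

end SignDiagonal

section PartialPivoting

lemma det_eq_zero_of_submatrix_eq_mul {ι κ μ K : Type*} [Fintype ι] [DecidableEq ι] [Fintype κ]
    [Fintype μ] [Field K] {A : Matrix ι ι K} {f : κ → ι} (hf : f.Injective) {X : Matrix ι μ K}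
    {Y : Matrix μ κ K} (hcard : Fintype.card μ < Fintype.card κ)
    (h : A.submatrix id f = X * Y) : A.det = 0 := by
  by_contra hA
  have hcols : LinearIndependent K (A.submatrix id f)ᵀ.row :=
    (Matrix.linearIndependent_cols_iff_isUnit.mpr
      ((Matrix.isUnit_iff_isUnit_det A).mpr (isUnit_iff_ne_zero.mpr hA))).comp f hf
  have hrank : (X * Y).rank = Fintype.card κ := by
    rw [← h, ← Matrix.rank_transpose, hcols.rank_matrix]
  exact hcard.not_ge (hrank ▸ (Matrix.rank_mul_le_left X Y).trans (Matrix.rank_le_card_width X))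

variable {n : ℕ} {a : ℕ → ℕ → ℝ}

lemma IsPP.gaussElim_self_ne_zero (hPP : IsPP (leadingBlock n n a))
    (hdet : (leadingBlock n n a).det ≠ 0) {m : ℕ} (hm : m < n) : gaussElim a m m m ≠ 0 := by
  induction m using Nat.strong_induction_on with
  | _ m ih =>
  intro hzero
  have hp : ∀ k < m, gaussElim a k k k ≠ 0 := fun k hk => ih k hk (hk.trans hm)
  have hcols : ∀ i < n, ∀ j < m + 1, gaussElim a m i j = 0 := by
    intro i hi j hj
    obtain h | ⟨him, rfl⟩ : (i < m ∨ j < m) ∨ (m ≤ i ∧ j = m) := by omega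
    · exact gaussElim_eq_zero hp h
    · have hpivot := hPP ⟨j, hm⟩ ⟨i, hi⟩ him
      rw [geEntry_leadingBlock hp, geEntry_leadingBlock hp] at hpivot
      simpa [hzero] using hpivot
  exact hdet (det_eq_zero_of_submatrix_eq_mul (Fin.castLE_injective hm) (by simp)
    (leadingBlock_eq_mul hcols))

lemma IsPP.abs_gaussMultiplier_le_one (hPP : IsPP (leadingBlock n n a))
    (hp : ∀ k < n, gaussElim a k k k ≠ 0) {k i : ℕ} (hki : k ≤ i) (hi : i < n) :
    |gaussMultiplier a i k| ≤ 1 := by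
  have hk : k < n := hki.trans_lt hi
  have hpivot := hPP ⟨k, hk⟩ ⟨i, hi⟩ hki
  have hp' : ∀ m < k, gaussElim a m m m ≠ 0 := fun m hm => hp m (hm.trans hk)
  rw [geEntry_leadingBlock hp', geEntry_leadingBlock hp'] at hpivot
  rw [gaussMultiplier, abs_div]
  exact div_le_one_of_le₀ hpivot (abs_nonneg _)

end PartialPivoting

section MaximalGrowth

variable {K : Type*} [Field K] [LinearOrder K] [IsStrictOrderedRing K]

lemma eq_of_abs_sub_mul_eq_two_mul {x l y B : K} (hx : |x| ≤ B) (hl : |l| ≤ 1) (hy : |y| ≤ B)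
    (h : |x - l * y| = 2 * B) : |x| = B ∧ |y| = B ∧ l * y = -x := by
  have hly : |l * y| ≤ |y| := by
    rw [abs_mul]; exact mul_le_of_le_one_left (abs_nonneg y) hl
  have htriangle := abs_sub x (l * y)
  have hxB : |x| = B := by linarith
  have hlyB : |l * y| = B := by linarith
  refine ⟨hxB, by linarith, ?_⟩
  grind

variable {a : ℕ → ℕ → K} {B : K} {j m : ℕ}

lemma abs_gaussElim_le (hl : ∀ k i, k < i → i ≤ m → |gaussMultiplier a i k| ≤ 1)
    (hB : ∀ i ≤ m, |a i j| ≤ B) {k i : ℕ} (hki : k ≤ i) (hi : i ≤ m) :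
    |gaussElim a k i j| ≤ 2 ^ k * B := by
  induction k generalizing i with
  | zero => simpa [gaussElim] using hB i hi
  | succ k ih =>
    calc |gaussElim a (k + 1) i j|
        ≤ |gaussElim a k i j| + |gaussMultiplier a i k| * |gaussElim a k k j| := by
          rw [gaussElim_succ, ← abs_mul]; exact abs_sub _ _
      _ ≤ 2 ^ k * B + 1 * (2 ^ k * B) := by
          gcongr
          · exact ih (by omega) hi
          · exact hl k i hki hi
          · exact ih le_rfl (by omega)
      _ = 2 ^ (k + 1) * B := by ring

lemma gaussElim_eq_of_abs_succ_eq (hl : ∀ k i, k < i → i ≤ m → |gaussMultiplier a i k| ≤ 1)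
    (hB : ∀ i ≤ m, |a i j| ≤ B) {k i : ℕ} (hki : k < i) (hi : i ≤ m)
    (h : |gaussElim a (k + 1) i j| = 2 ^ (k + 1) * B) :
    |gaussElim a k i j| = 2 ^ k * B ∧ |gaussElim a k k j| = 2 ^ k * B ∧
      gaussMultiplier a i k * gaussElim a k k j = -gaussElim a k i j := by
  rw [gaussElim_succ, pow_succ', mul_assoc] at h
  exact eq_of_abs_sub_mul_eq_two_mul (abs_gaussElim_le hl hB hki.le hi) (hl k i hki hi)
    (abs_gaussElim_le hl hB le_rfl (hki.le.trans hi)) h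

lemma abs_gaussElim_eq (hl : ∀ k i, k < i → i ≤ m → |gaussMultiplier a i k| ≤ 1)
    (hB : ∀ i ≤ m, |a i j| ≤ B) (hmax : |gaussElim a m m j| = 2 ^ m * B) {k i : ℕ}
    (hki : k ≤ i) (hi : i ≤ m) : |gaussElim a k i j| = 2 ^ k * B := by
  induction hki.trans hi using Nat.decreasingInduction generalizing i with
  | self => rwa [hi.antisymm hki]
  | of_succ k hk ih =>
    obtain hki | rfl := hki.lt_or_eq
    · exact (gaussElim_eq_of_abs_succ_eq hl hB hki hi (ih hki hi)).1
    · exact (gaussElim_eq_of_abs_succ_eq hl hB k.lt_succ_self hk (ih le_rfl hk)).2.1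

lemma gaussElim_eq_two_pow_mul (hl : ∀ k i, k < i → i ≤ m → |gaussMultiplier a i k| ≤ 1)
    (hB : ∀ i ≤ m, |a i j| ≤ B) (hmax : |gaussElim a m m j| = 2 ^ m * B) {k i : ℕ}
    (hki : k ≤ i) (hi : i ≤ m) : gaussElim a k i j = 2 ^ k * a i j := by
  induction k generalizing i with
  | zero => simp [gaussElim]
  | succ k ih =>
    rw [gaussElim_succ, (gaussElim_eq_of_abs_succ_eq hl hB hki hi
      (abs_gaussElim_eq hl hB hmax hki hi)).2.2, ih (by omega) hi]
    ring

lemma gaussMultiplier_mul_eq_neg (hl : ∀ k i, k < i → i ≤ m → |gaussMultiplier a i k| ≤ 1)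
    (hB : ∀ i ≤ m, |a i j| ≤ B) (hmax : |gaussElim a m m j| = 2 ^ m * B) {k i : ℕ}
    (hki : k < i) (hi : i ≤ m) : gaussMultiplier a i k * a k j = -a i j := by
  have h := (gaussElim_eq_of_abs_succ_eq hl hB hki hi (abs_gaussElim_eq hl hB hmax hki hi)).2.2
  rw [gaussElim_eq_two_pow_mul hl hB hmax le_rfl (hki.le.trans hi),
    gaussElim_eq_two_pow_mul hl hB hmax hki.le hi] at h
  exact mul_left_cancel₀ (pow_ne_zero k two_ne_zero) (by linear_combination h)

end MaximalGrowth

section WilkinsonFactorization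

lemma abs_le_maxAbs {n : ℕ} (A : Matrix (Fin n) (Fin n) ℝ) (i j : Fin n) : |A i j| ≤ maxAbs A :=
  (Finite.le_ciSup (fun j => |A i j|) j).trans (Finite.le_ciSup (fun i => ⨆ j, |A i j|) i)

lemma exists_abs_geEntry_eq_maxGE {n : ℕ} [NeZero n] (A : Matrix (Fin n) (Fin n) ℝ) :
    ∃ k i j : Fin n, k ≤ i ∧ k ≤ j ∧ |geEntry A k i j| = maxGE A := by
  obtain ⟨k, hk⟩ := exists_eq_ciSup_of_finite (f := fun k : Fin n =>
    ⨆ i : {i : Fin n // k ≤ i}, ⨆ j : {j : Fin n // k ≤ j}, |geEntry A k i.1 j.1|)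
  have : Nonempty {i : Fin n // k ≤ i} := ⟨⟨k, le_rfl⟩⟩
  obtain ⟨i, hi⟩ := exists_eq_ciSup_of_finite (f := fun i : {i : Fin n // k ≤ i} =>
    ⨆ j : {j : Fin n // k ≤ j}, |geEntry A k i.1 j.1|)
  obtain ⟨j, hj⟩ := exists_eq_ciSup_of_finite (f := fun j : {j : Fin n // k ≤ j} =>
    |geEntry A k i.1 j.1|)
  exact ⟨k, i, j, i.2, j.2, by rw [maxGE, ← hk, ← hi, ← hj]⟩

variable {a : ℕ → ℕ → ℝ}

lemma maxAbs_pos_of_growth_ne_zero {n : ℕ} {A : Matrix (Fin n) (Fin n) ℝ} (h : growth A ≠ 0) :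
    0 < maxAbs A :=
  (Real.iSup_nonneg fun _ => Real.iSup_nonneg fun _ => abs_nonneg _).lt_of_ne'
    (div_ne_zero_iff.mp h).2

lemma IsPP.abs_gaussElim_last_eq {m : ℕ} (hPP : IsPP (leadingBlock (m + 1) (m + 1) a))
    (hp : ∀ k < m + 1, gaussElim a k k k ≠ 0)
    (hgrowth : growth (leadingBlock (m + 1) (m + 1) a) = 2 ^ m) :
    |gaussElim a m m m| = 2 ^ m * maxAbs (leadingBlock (m + 1) (m + 1) a) := by
  set A := leadingBlock (m + 1) (m + 1) a
  have hpos : 0 < maxAbs A := maxAbs_pos_of_growth_ne_zero (by simp [hgrowth])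
  obtain ⟨k, i, j, hki, hkj, hmax⟩ := exists_abs_geEntry_eq_maxGE A
  rw [geEntry_leadingBlock fun l hl => hp l (hl.trans k.2),
    (div_eq_iff hpos.ne').mp hgrowth] at hmax
  have hle : 2 ^ m * maxAbs A ≤ 2 ^ k.val * maxAbs A := hmax ▸ abs_gaussElim_le
    (fun k i hki hi => hPP.abs_gaussMultiplier_le_one hp hki.le (Nat.lt_succ_of_le hi))
    (fun i hi => abs_le_maxAbs A ⟨i, Nat.lt_succ_of_le hi⟩ j) hki (Nat.le_of_lt_succ i.2)
  have hmk : m ≤ k := (pow_le_pow_iff_right₀ one_lt_two).mp (le_of_mul_le_mul_right hle hpos)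
  obtain ⟨hk, hi, hj⟩ : (k : ℕ) = m ∧ (i : ℕ) = m ∧ (j : ℕ) = m := by
    rw [Fin.le_def] at hki hkj; omega
  rwa [hk, hi, hj] at hmax

lemma leadingBlock_gaussMultiplier_eq {n : ℕ} (hp : ∀ k < n, gaussElim a k k k ≠ 0) {s : ℕ → ℝ}
    (hs : ∀ i < n, s i * s i = 1)
    (h : ∀ k i, k < i → i < n → gaussMultiplier a i k * s k = -s i) :
    leadingBlock n n (gaussMultiplier a) =
      diagonal (fun i : Fin n => s i) * Lmat n * diagonal (fun i : Fin n => s i) := by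
  ext i k
  rw [Matrix.mul_diagonal, Matrix.diagonal_mul]
  simp only [leadingBlock, Matrix.of_apply, Lmat]
  obtain hik | rfl | hki := lt_trichotomy i k
  · simp [gaussMultiplier_eq_zero hp hik k.2, hik.ne, hik.not_gt]
  · simp [gaussMultiplier, div_self (hp i i.2), hs i i.2]
  · rw [if_neg hki.ne', if_pos hki]
    linear_combination (-gaussMultiplier a i k) * hs k k.2 + s k * h k i hki i.2

theorem IsPP.exists_eq_signDiag_mul_Lmat_mul {m : ℕ} {A : Matrix (Fin (m + 1)) (Fin (m + 1)) ℝ}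
    (hPP : IsPP A) (hdet : A.det ≠ 0) (hgrowth : growth A = 2 ^ m) :
    ∃ D U, IsSignDiag D ∧ U.IsUpperTriangular ∧ A = D * Lmat (m + 1) * U := by
  obtain ⟨a, rfl⟩ := exists_leadingBlock_eq A
  set A := leadingBlock (m + 1) (m + 1) a
  have hp : ∀ k < m + 1, gaussElim a k k k ≠ 0 := fun k hk => hPP.gaussElim_self_ne_zero hdet hk
  have hl : ∀ k i, k < i → i ≤ m → |gaussMultiplier a i k| ≤ 1 := fun k i hki hi =>
    hPP.abs_gaussMultiplier_le_one hp hki.le (Nat.lt_succ_of_le hi)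
  have hB : ∀ i ≤ m, |a i m| ≤ maxAbs A := fun i hi =>
    abs_le_maxAbs A ⟨i, Nat.lt_succ_of_le hi⟩ (Fin.last m)
  have hmax : |gaussElim a m m m| = 2 ^ m * maxAbs A := hPP.abs_gaussElim_last_eq hp hgrowth
  have hpos : 0 < maxAbs A := maxAbs_pos_of_growth_ne_zero (by simp [hgrowth])
  set s : ℕ → ℝ := fun i => a i m / maxAbs A
  have hs : ∀ i < m + 1, |s i| = 1 := by
    intro i hi
    have hi' := abs_gaussElim_eq hl hB hmax i.zero_le (Nat.le_of_lt_succ hi)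
    rw [pow_zero, one_mul, gaussElim] at hi'
    rw [abs_div, hi', abs_of_pos hpos, div_self hpos.ne']
  have hlower : leadingBlock (m + 1) (m + 1) (gaussMultiplier a) = _ :=
    leadingBlock_gaussMultiplier_eq hp (s := s)
      (fun i hi => by rw [← abs_mul_abs_self, hs i hi, one_mul]) fun k i hki hi => by
        rw [← mul_div_assoc, gaussMultiplier_mul_eq_neg hl hB hmax hki (Nat.le_of_lt_succ hi),
          neg_div]
  refine ⟨_, diagonal (fun i : Fin (m + 1) => s i) *
      leadingBlock (m + 1) (m + 1) fun k => gaussElim a k k,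
    isSignDiag_diagonal fun i => hs i i.2, ?_, ?_⟩
  · exact (Matrix.blockTriangular_diagonal _).mul (isUpperTriangular_leadingBlock_gaussElim hp)
  · rw [← Matrix.mul_assoc, ← hlower]
    exact leadingBlock_eq_mul fun i hi _ _ => gaussElim_eq_zero hp (.inl hi)

end WilkinsonFactorization

section OrthogonalFactor

lemma alpha_succ (j : ℕ) : alpha (j + 1) = 1 + 2 / 3 * (4 ^ j - 1) := rfl

lemma alpha_succ_succ (j : ℕ) : alpha (j + 2) = 4 * alpha (j + 1) - 1 := by
  rw [alpha_succ, alpha_succ]; ring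

lemma one_le_alpha (j : ℕ) : 1 ≤ alpha j := by
  have : (1 : ℝ) ≤ 4 ^ (j - 1) := one_le_pow₀ (by norm_num)
  rw [alpha]; linarith

lemma sum_sq_two_pow_sub (j : ℕ) :
    ∑ k ∈ Finset.range j, ((2 : ℝ) ^ (j - k - 1)) ^ 2 = (alpha (j + 1) - 1) / 2 := by
  calc ∑ k ∈ Finset.range j, ((2 : ℝ) ^ (j - k - 1)) ^ 2
      = ∑ k ∈ Finset.range j, (4 : ℝ) ^ (j - 1 - k) :=
        Finset.sum_congr rfl fun k _ => by rw [← pow_mul', pow_mul, Nat.sub_right_comm]; norm_num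
    _ = ∑ k ∈ Finset.range j, (4 : ℝ) ^ k := Finset.sum_range_reflect (fun k => (4 : ℝ) ^ k) j
    _ = (alpha (j + 1) - 1) / 2 := by
        rw [geom_sum_eq (by norm_num), alpha_succ]; ring

lemma sum_range_eq_add_add_sum_Ico {M : Type*} [AddCommMonoid M] (f : ℕ → M) {j n : ℕ}
    (hj : j < n) : ∑ k ∈ Finset.range n, f k =
      ∑ k ∈ Finset.range j, f k + (f j + ∑ k ∈ Finset.Ico (j + 1) n, f k) := by
  rw [← Finset.sum_eq_sum_Ico_succ_bot hj, Finset.sum_range_add_sum_Ico f hj.le]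

/-- The formula that defines `Qhat` in the columns `j ≤ n - 3`, taken for all columns. It agrees
with `Qhat` except in column `n - 2`, which it multiplies by `alpha (n - 1)`. -/
noncomputable def uniformQhat (n i j : ℕ) : ℝ :=
  if i < j then -((n : ℝ) - j - 2) * 2 ^ (j - i - 1)
  else if i = j then ((n : ℝ) - j - 1) * (alpha (j + 1) - 1) + 1
  else -alpha (j + 1)

variable {n i j k : ℕ}

lemma uniformQhat_of_lt (h : i < j) :
    uniformQhat n i j = -((n : ℝ) - j - 2) * 2 ^ (j - i - 1) :=
  if_pos h

lemma uniformQhat_self :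
    uniformQhat n j j = ((n : ℝ) - j - 1) * (alpha (j + 1) - 1) + 1 := by
  simp [uniformQhat]

lemma uniformQhat_of_gt (h : j < i) : uniformQhat n i j = -alpha (j + 1) := by
  simp [uniformQhat, h.not_gt, h.ne']

lemma uniformQhat_eq_two_pow_mul (hki : k ≤ i) (hij : i < j) :
    uniformQhat n k j = 2 ^ (i - k) * uniformQhat n i j := by
  rw [uniformQhat_of_lt hij, uniformQhat_of_lt (hki.trans_lt hij), mul_left_comm, ← pow_add]
  congr 2
  omega

lemma sum_Ico_uniformQhat (hij : i < j) (hj : j < n) :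
    ∑ k ∈ Finset.Ico (i + 1) n, uniformQhat n k j = uniformQhat n i j := by
  obtain ⟨j, rfl⟩ : ∃ l, j = l + 1 := ⟨j - 1, by omega⟩
  induction Nat.le_of_lt_succ hij using Nat.decreasingInduction with
  | self =>
    have hbelow : ∑ k ∈ Finset.Ico (j + 2) n, uniformQhat n k (j + 1) =
        ((n : ℝ) - j - 2) * -alpha (j + 2) := by
      rw [Finset.sum_congr rfl fun k hk => uniformQhat_of_gt (Finset.mem_Ico.mp hk).1,
        Finset.sum_const, Nat.card_Ico, nsmul_eq_mul, Nat.cast_sub hj]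
      push_cast
      ring
    rw [Finset.sum_eq_sum_Ico_succ_bot hj, hbelow, uniformQhat_self,
      uniformQhat_of_lt (Nat.lt_add_one j), Nat.add_sub_cancel_left, Nat.sub_self]
    push_cast
    ring
  | of_succ i hi ih =>
    rw [Finset.sum_eq_sum_Ico_succ_bot (by omega), ih (by omega),
      uniformQhat_eq_two_pow_mul (Nat.le_add_right i 1) (by omega), Nat.add_sub_cancel_left]
    ring

lemma sum_uniformQhat_mul_of_lt (hij : i < j) (hj : j < n) :
    ∑ k ∈ Finset.range n, uniformQhat n k i * uniformQhat n k j = 0 := by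
  have habove : ∑ k ∈ Finset.range i, uniformQhat n k i * uniformQhat n k j =
      -((n : ℝ) - i - 2) * (alpha (i + 1) - 1) * uniformQhat n i j := by
    calc ∑ k ∈ Finset.range i, uniformQhat n k i * uniformQhat n k j
        = ∑ k ∈ Finset.range i,
            -((n : ℝ) - i - 2) * 2 * uniformQhat n i j * ((2 : ℝ) ^ (i - k - 1)) ^ 2 := by
          refine Finset.sum_congr rfl fun k hk => ?_
          have hki := Finset.mem_range.mp hk
          rw [uniformQhat_of_lt hki, uniformQhat_eq_two_pow_mul hki.le hij,
            show i - k = i - k - 1 + 1 by omega, Nat.add_sub_cancel]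
          ring
      _ = -((n : ℝ) - i - 2) * (alpha (i + 1) - 1) * uniformQhat n i j := by
          rw [← Finset.mul_sum, sum_sq_two_pow_sub]; ring
  have hbelow : ∑ k ∈ Finset.Ico (i + 1) n, uniformQhat n k i * uniformQhat n k j =
      -alpha (i + 1) * uniformQhat n i j := by
    rw [← sum_Ico_uniformQhat hij hj, Finset.mul_sum]
    exact Finset.sum_congr rfl fun k hk => by rw [uniformQhat_of_gt (Finset.mem_Ico.mp hk).1]
  rw [sum_range_eq_add_add_sum_Ico _ (hij.trans hj), habove, hbelow, uniformQhat_self]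
  ring

lemma sum_uniformQhat_sq (hj : j < n) :
    ∑ k ∈ Finset.range n, uniformQhat n k j ^ 2 =
      ((n : ℝ) - j - 2) ^ 2 * ((alpha (j + 1) - 1) / 2) +
        (((n : ℝ) - j - 1) * (alpha (j + 1) - 1) + 1) ^ 2 +
        ((n : ℝ) - j - 1) * alpha (j + 1) ^ 2 := by
  have habove : ∑ k ∈ Finset.range j, uniformQhat n k j ^ 2 =
      ((n : ℝ) - j - 2) ^ 2 * ((alpha (j + 1) - 1) / 2) := by
    rw [← sum_sq_two_pow_sub, Finset.mul_sum]
    refine Finset.sum_congr rfl fun k hk => ?_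
    rw [uniformQhat_of_lt (Finset.mem_range.mp hk), mul_pow, neg_sq]
  have hbelow : ∑ k ∈ Finset.Ico (j + 1) n, uniformQhat n k j ^ 2 =
      ((n : ℝ) - j - 1) * alpha (j + 1) ^ 2 := by
    rw [Finset.sum_congr rfl fun k hk => by rw [uniformQhat_of_gt (Finset.mem_Ico.mp hk).1, neg_sq],
      Finset.sum_const, Nat.card_Ico, nsmul_eq_mul, Nat.cast_sub hj]
    push_cast
    ring
  rw [sum_range_eq_add_add_sum_Ico _ hj, habove, hbelow, uniformQhat_self]
  ring

lemma sum_uniformQhat_sq_pos (hj : j < n) :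
    0 < ∑ k ∈ Finset.range n, uniformQhat n k j ^ 2 := by
  refine Finset.sum_pos' (fun k _ => sq_nonneg _) ⟨j, Finset.mem_range.mpr hj, ?_⟩
  have hn : (j : ℝ) + 1 ≤ n := mod_cast hj
  have hα := one_le_alpha (j + 1)
  rw [uniformQhat_self]
  have := mul_nonneg (sub_nonneg.mpr hn) (sub_nonneg.mpr hα)
  exact pow_pos (by linarith) 2

/-- The factor by which column `j` of `Qhat n` differs from the uniform formula. -/
noncomputable def columnScale (n j : ℕ) : ℝ :=
  if j + 2 = n then (alpha (j + 1))⁻¹ else 1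

lemma columnScale_pos (n j : ℕ) : 0 < columnScale n j := by
  have := one_le_alpha (j + 1)
  rw [columnScale]
  split_ifs <;> positivity

lemma Qhat_eq_columnScale_mul (i j : Fin n) :
    Qhat n i j = columnScale n j * uniformQhat n i j := by
  obtain hj | hj | hj : (j : ℕ) + 1 = n ∨ (j : ℕ) + 2 = n ∨ (j : ℕ) + 2 < n := by omega
  · have hn : (n : ℝ) = j + 1 := mod_cast hj.symm
    rw [columnScale, if_neg (by omega), one_mul, Qhat, if_pos (by omega), uniformQhat, hn]
    obtain hij | hij : (i : ℕ) < j ∨ (i : ℕ) = j := by omega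
    · rw [if_neg (by omega), if_pos hij, show n - 2 - (i : ℕ) = j - i - 1 by omega]
      ring
    · rw [if_pos (by omega), if_neg (by omega), if_pos hij]
      ring
  · have hn : (n : ℝ) = j + 2 := mod_cast hj.symm
    have hα : alpha (j + 1) ≠ 0 := (zero_lt_one.trans_le (one_le_alpha _)).ne'
    rw [columnScale, if_pos hj, Qhat, if_neg (by omega), if_pos (by omega), uniformQhat, hn]
    obtain hij | hij | hij := lt_trichotomy (i : ℕ) j
    · rw [if_neg (by omega), if_neg (by omega), if_pos hij]
      ring
    · rw [if_pos (by omega), if_neg (by omega), if_pos hij, eq_inv_mul_iff_mul_eq₀ hα]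
      ring
    · rw [if_neg (by omega), if_pos (by omega), if_neg (by omega), if_neg (by omega),
        mul_neg, inv_mul_cancel₀ hα]
  · rw [columnScale, if_neg hj.ne, one_mul, Qhat, if_neg (by omega), if_neg (by omega)]
    rfl

lemma Dhat_eq_columnScale_sq_mul_sum (j : Fin n) :
    Dhat n j j = columnScale n j ^ 2 * ∑ k ∈ Finset.range n, uniformQhat n k j ^ 2 := by
  rw [sum_uniformQhat_sq j.2, Dhat, Matrix.diagonal_apply_eq, columnScale]
  have hα : alpha (j + 1) ≠ 0 := (zero_lt_one.trans_le (one_le_alpha _)).ne'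
  obtain hj0 | ⟨i, hi⟩ : (j : ℕ) = 0 ∨ ∃ i, (j : ℕ) = i + 1 := by cases (j : ℕ) <;> simp
  · rw [if_pos hj0, hj0, alpha_succ, pow_zero]
    split_ifs <;> ring_nf
  rw [if_neg (by omega)]
  obtain hj | hj | hj : (j : ℕ) + 1 = n ∨ (j : ℕ) + 2 = n ∨ (j : ℕ) + 2 < n := by omega
  · have hn : (n : ℝ) = j + 1 := mod_cast hj.symm
    rw [if_neg (by omega), if_pos (by omega), if_neg (by omega), hn, show n - 1 = i + 1 by omega,
      hi, alpha_succ_succ]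
    ring
  · have hn : (n : ℝ) = j + 2 := mod_cast hj.symm
    rw [if_pos (by omega), if_pos hj, hn]
    field_simp
    ring
  · have hden : 2 * alpha (j + 1) - 2 ≠ 0 := by
      have := one_le_alpha (i + 1)
      rw [hi, alpha_succ_succ]
      linarith
    rw [if_neg (by omega), if_neg (by omega), if_neg hj.ne, hi]
    rw [hi, alpha_succ_succ] at hden
    rw [alpha_succ_succ]
    field_simp
    ring

lemma Qmat_eq_uniformQhat_div_sqrt (i j : Fin n) :
    Qmat n i j =
      uniformQhat n i j / √(∑ k ∈ Finset.range n, uniformQhat n k j ^ 2) := by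
  have hscale := columnScale_pos n j
  rw [Qmat, Matrix.mul_diagonal, Qhat_eq_columnScale_mul, Dhat_eq_columnScale_sq_mul_sum,
    Real.sqrt_mul (sq_nonneg _), Real.sqrt_sq hscale.le, ← div_eq_mul_inv,
    mul_div_mul_left _ _ hscale.ne']

lemma Qmat_mem_orthogonalGroup (n : ℕ) : Qmat n ∈ orthogonalGroup (Fin n) ℝ := by
  rw [Matrix.mem_orthogonalGroup_iff']
  ext i j
  have hentry : ((Qmat n)ᵀ * Qmat n) i j =
      (∑ k ∈ Finset.range n, uniformQhat n k i * uniformQhat n k j) /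
        (√(∑ k ∈ Finset.range n, uniformQhat n k i ^ 2) *
          √(∑ k ∈ Finset.range n, uniformQhat n k j ^ 2)) := by
    simp only [Matrix.mul_apply, Matrix.transpose_apply, Qmat_eq_uniformQhat_div_sqrt,
      div_mul_div_comm, ← Finset.sum_div]
    rw [Fin.sum_univ_eq_sum_range fun k => uniformQhat n k i * uniformQhat n k j]
  rw [hentry]
  obtain hij | rfl | hji := lt_trichotomy i j
  · rw [sum_uniformQhat_mul_of_lt hij j.2, zero_div, Matrix.one_apply_ne hij.ne]
  · have hpos := sum_uniformQhat_sq_pos i.2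
    simp only [← pow_two]
    rw [Real.sq_sqrt hpos.le, div_self hpos.ne', Matrix.one_apply_eq]
  · simp only [mul_comm (uniformQhat n _ i)]
    rw [sum_uniformQhat_mul_of_lt hji i.2, zero_div, Matrix.one_apply_ne hji.ne']

lemma sum_mul_Lmat (f : ℕ → ℝ) (j : Fin n) :
    ∑ k : Fin n, f k * Lmat n k j = f j - ∑ k ∈ Finset.Ico (j.val + 1) n, f k := by
  calc ∑ k : Fin n, f k * Lmat n k j
      = ∑ k ∈ Finset.range n, f k * if k = j then 1 else if j < k then -1 else 0 := by
        rw [← Fin.sum_univ_eq_sum_range fun k =>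
          f k * if k = (j : ℕ) then 1 else if (j : ℕ) < k then -1 else 0]
        simp only [Lmat, Fin.ext_iff, Fin.lt_def]
    _ = 0 + (f j + ∑ k ∈ Finset.Ico (j.val + 1) n, -f k) := by
        rw [sum_range_eq_add_add_sum_Ico _ j.2, if_pos rfl, mul_one]
        congr 2
        · refine Finset.sum_eq_zero fun k hk => ?_
          have hkj := Finset.mem_range.mp hk
          rw [if_neg hkj.ne, if_neg hkj.not_gt, mul_zero]
        · refine Finset.sum_congr rfl fun k hk => ?_
          have hjk : j.val < k := (Finset.mem_Ico.mp hk).1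
          rw [if_neg hjk.ne', if_pos hjk, mul_neg_one]
    _ = f j - ∑ k ∈ Finset.Ico (j.val + 1) n, f k := by
        rw [zero_add, Finset.sum_neg_distrib, sub_eq_add_neg]

lemma isUpperTriangular_Qmat_transpose_mul_Lmat (n : ℕ) :
    ((Qmat n)ᵀ * Lmat n).IsUpperTriangular := by
  intro i j (hji : j < i)
  simp only [Matrix.mul_apply, Matrix.transpose_apply, Qmat_eq_uniformQhat_div_sqrt,
    div_mul_eq_mul_div, ← Finset.sum_div]
  rw [sum_mul_Lmat fun k => uniformQhat n k i, sum_Ico_uniformQhat hji i.2]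
  simp

end OrthogonalFactor

/-- if `A` (with `n ≥ 3`) is PP with maximal growth `ρ(A) = 2^{n-1}` and
`A = QR` is its QR factorization (`R` upper triangular with positive diagonal), then
`Q = D Q_n D̃` for some diagonal sign matrices `D, D̃`, and `ρ(Q) = ρ(Q_n)`. -/
theorem max_growth_orthogonal_factor (n : ℕ) (hn : 3 ≤ n)
    (A Q R : Matrix (Fin n) (Fin n) ℝ)
    (hPP : IsPP A) (hρ : growth A = 2 ^ (n - 1))
    (hQR : A = Q * R) (hQ : Qᵀ * Q = 1)
    (hRu : ∀ i j : Fin n, j < i → R i j = 0) (hRd : ∀ i : Fin n, 0 < R i i) :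
    (∃ D Dt : Matrix (Fin n) (Fin n) ℝ,
      IsSignDiag D ∧ IsSignDiag Dt ∧ Q = D * Qmat n * Dt) ∧
    growth Q = growth (Qmat n) := by
  obtain ⟨m, rfl⟩ : ∃ m, n = m + 1 := ⟨n - 1, by omega⟩
  have hR : R.IsUpperTriangular := fun i j hij => hRu i j hij
  have hRdet : R.det ≠ 0 :=
    Matrix.det_of_isUpperTriangular hR ▸ (Finset.prod_pos fun i _ => hRd i).ne'
  have hAdet : A.det ≠ 0 := by
    rw [hQR, Matrix.det_mul]
    exact mul_ne_zero (Matrix.det_ne_zero_of_left_inverse hQ) hRdet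
  obtain ⟨D, U, hD, hU, hA⟩ := hPP.exists_eq_signDiag_mul_Lmat_mul hAdet hρ
  have hDD : Dᵀ * D = 1 := (Matrix.mem_orthogonalGroup_iff' _ _).mp hD.mem_orthogonalGroup
  have htriangular : ((D * Qmat (m + 1))ᵀ * (Q * R)).IsUpperTriangular := by
    rw [← hQR, hA, Matrix.transpose_mul, Matrix.mul_assoc D, Matrix.mul_assoc,
      ← Matrix.mul_assoc Dᵀ, hDD, Matrix.one_mul, ← Matrix.mul_assoc]
    exact (isUpperTriangular_Qmat_transpose_mul_Lmat _).mul hU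
  obtain ⟨Dt, hDt, hQeq⟩ := exists_isSignDiag_eq_mul_of_isUpperTriangular
    (mul_mem hD.mem_orthogonalGroup (Qmat_mem_orthogonalGroup _))
    ((Matrix.mem_orthogonalGroup_iff' _ _).mpr hQ) hR
    ((Matrix.isUnit_iff_isUnit_det R).mpr hRdet.isUnit) htriangular
  exact ⟨⟨D, Dt, hD, hDt, hQeq⟩, hQeq ▸ growth_mul_mul_of_isSignDiag hD hDt _⟩
end
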